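/- arXiv:2312.07841 — 2 statements merged into one kernel-verified Lean document; each statement's English description precedes it below -/
import Mathlib

section
/- Let C ≥ 2, N ≥ 1, p ≥ 1 be integers, let γ > 0 satisfy γ·(C−2) ≤ 2, let E1 > 0 and E2 ≥ 0. Suppose w_1,…,w_C ∈ ℝ^p satisfy ‖w_c‖₂ = E1 for all c ∈ [C] and ⟨w_i, w_j⟩ = −E1²/(C−1) for all i ≠ j, and set h_{i,c} = (E2/E1)·w_c for all i ∈ [N], c ∈ [C]. Then (1/(C·N)) · Σ_{i=1}^{N} Σ_{c=1}^{C} ( −⟨w_c, h_{i,c}⟩ + γ · Σ_{j≠c} ⟨w_j, h_{i,c}⟩ ) = −(1+γ)·E1·E2; consequently this configuration attains the minimum of the average unhinged loss over all choices of prototypes with ‖w_c‖₂ ≤ E1 and features with ‖h_{i,c}‖₂ ≤ E2. -/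
/-!
The loss is linear in the feature: for a feature `x` of class `c` it equals `-⟪v c, x⟫`, where
`v c = (1 + γ) • w c - γ • S` and `S = ∑ j, w j`. Expanding squares,
`∑ c, ‖v c‖² = (1 + γ)² * ∑ c, ‖w c‖² + γ * (γ * (C - 2) - 2) * ‖S‖²`, and the last term is
nonpositive because `γ * (C - 2) ≤ 2`. Cauchy–Schwarz over all samples then bounds the mean
loss below by `-(1 + γ) * r * s`, where `r` and `s` bound the root mean squares of the norms of the
prototypes and of the features. Both inequalities are equalities for centred prototypes (`S = 0`)
of mean square norm `r²` with features `(s / r) • w c`, and a simplex is centred.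
-/

open scoped BigOperators
open RealInnerProductSpace

/-- The average unhinged loss of a configuration of prototypes and features. -/
noncomputable def avgUnhingedLoss (C N p : ℕ) (γ : ℝ)
    (w : Fin C → EuclideanSpace ℝ (Fin p))
    (h : Fin N → Fin C → EuclideanSpace ℝ (Fin p)) : ℝ :=
  (1 / ((C : ℝ) * N)) *
    ∑ i : Fin N, ∑ c : Fin C,
      (-⟪w c, h i c⟫ + γ * ∑ j ∈ Finset.univ.erase c, ⟪w j, h i c⟫)

open Finset

section MeanInner

variable {α E : Type*} [SeminormedAddCommGroup E]

lemma expect_norm_sq_le [Fintype α] [Nonempty α] {f : α → E} {r : ℝ} (hf : ∀ a, ‖f a‖ ≤ r) :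
    𝔼 a, ‖f a‖ ^ 2 ≤ r ^ 2 :=
  expect_le univ_nonempty fun a _ => pow_le_pow_left₀ (norm_nonneg _) (hf a) 2

variable [InnerProductSpace ℝ E]

lemma expect_inner_le_mul_of_expect_norm_sq_le {t : Finset α} {f g : α → E} {r s : ℝ}
    (hr : 0 ≤ r) (hs : 0 ≤ s) (hf : 𝔼 a ∈ t, ‖f a‖ ^ 2 ≤ r ^ 2)
    (hg : 𝔼 a ∈ t, ‖g a‖ ^ 2 ≤ s ^ 2) :
    𝔼 a ∈ t, ⟪f a, g a⟫ ≤ r * s := by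
  refine (expect_le_expect fun a _ => real_inner_le_norm (f a) (g a)).trans ?_
  refine le_of_sq_le_sq ?_ (mul_nonneg hr hs)
  calc (𝔼 a ∈ t, ‖f a‖ * ‖g a‖) ^ 2
      ≤ (𝔼 a ∈ t, ‖f a‖ ^ 2) * 𝔼 a ∈ t, ‖g a‖ ^ 2 := expect_mul_sq_le_sq_mul_sq _ _ _
    _ ≤ r ^ 2 * s ^ 2 :=
      mul_le_mul hf hg (expect_nonneg fun _ _ => sq_nonneg _) (sq_nonneg r)
    _ = (r * s) ^ 2 := (mul_pow r s 2).symm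

end MeanInner

section UnhingedLoss

variable {ι κ E : Type*} [Fintype ι] [NormedAddCommGroup E] [InnerProductSpace ℝ E]
  {γ r s : ℝ} {w : ι → E}

lemma sum_eq_zero_of_norm_eq_of_inner_eq [Nontrivial ι] (hw : ∀ c, ‖w c‖ = r)
    (hww : Pairwise fun i j => ⟪w i, w j⟫ = -r ^ 2 / ((Fintype.card ι : ℝ) - 1)) :
    ∑ c, w c = 0 := by
  classical
  have hcard : (Fintype.card ι : ℝ) - 1 ≠ 0 :=
    sub_ne_zero.2 (mod_cast Fintype.one_lt_card.ne')
  have orthogonal (c : ι) : ⟪w c, ∑ j, w j⟫ = 0 := by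
    have off_diagonal : ∀ j ∈ univ.erase c, ⟪w c, w j⟫ = -r ^ 2 / ((Fintype.card ι : ℝ) - 1) :=
      fun j hj => hww (ne_of_mem_erase hj).symm
    rw [inner_sum, ← add_sum_erase _ _ (mem_univ c), sum_congr rfl off_diagonal, sum_const,
      card_erase_of_mem (mem_univ c), card_univ, nsmul_eq_mul, Nat.cast_pred Fintype.card_pos,
      mul_div_cancel₀ _ hcard, real_inner_self_eq_norm_sq, hw, add_neg_cancel]
  rw [← inner_self_eq_zero (𝕜 := ℝ), sum_inner]
  exact sum_eq_zero fun c _ => orthogonal c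

/-- The bias-free unhinged loss `L_γ(x, c)` of a feature `x` with label `c`, for prototypes `w`
indexed by an arbitrary finite type in an arbitrary real inner product space. -/
noncomputable def unhingedLoss [DecidableEq ι] (γ : ℝ) (w : ι → E) (x : E) (c : ι) : ℝ :=
  -⟪w c, x⟫ + γ * ∑ j ∈ univ.erase c, ⟪w j, x⟫

/-- The mean unhinged loss of a class-balanced family of features, `h i c` being the `i`-th feature
of class `c`. -/
noncomputable def meanUnhingedLoss [DecidableEq ι] [Fintype κ] (γ : ℝ) (w : ι → E)
    (h : κ → ι → E) : ℝ :=
  𝔼 i, 𝔼 c, unhingedLoss γ w (h i c) c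

/-- The negative gradient of the unhinged loss with respect to a feature of class `c`. The sum runs
over all classes, `c` included, which accounts for the coefficient `1 + γ` of `w c`. -/
noncomputable def contrastVector (γ : ℝ) (w : ι → E) (c : ι) : E :=
  (1 + γ) • w c - γ • ∑ j, w j

lemma unhingedLoss_eq_neg_inner_contrastVector [DecidableEq ι] (γ : ℝ) (w : ι → E) (x : E) (c : ι) :
    unhingedLoss γ w x c = -⟪contrastVector γ w c, x⟫ := by
  rw [unhingedLoss, contrastVector, inner_sub_left, real_inner_smul_left, real_inner_smul_left,
    sum_inner, ← add_sum_erase _ _ (mem_univ c)]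
  ring

lemma sum_norm_sq_contrastVector (γ : ℝ) (w : ι → E) :
    ∑ c, ‖contrastVector γ w c‖ ^ 2 = (1 + γ) ^ 2 * ∑ c, ‖w c‖ ^ 2
      + γ * (γ * ((Fintype.card ι : ℝ) - 2) - 2) * ‖∑ j, w j‖ ^ 2 := by
  set S := ∑ j, w j with hS
  have expand (c : ι) : ‖contrastVector γ w c‖ ^ 2
      = (1 + γ) ^ 2 * ‖w c‖ ^ 2 - 2 * (1 + γ) * γ * ⟪w c, S⟫ + γ ^ 2 * ‖S‖ ^ 2 := by
    rw [contrastVector, norm_sub_sq_real, norm_smul, norm_smul, real_inner_smul_left,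
      real_inner_smul_right, mul_pow, mul_pow, Real.norm_eq_abs, Real.norm_eq_abs, sq_abs, sq_abs]
    ring
  have sum_inner_S : ∑ c, ⟪w c, S⟫ = ‖S‖ ^ 2 := by
    rw [← sum_inner, ← hS, real_inner_self_eq_norm_sq]
  simp only [expand, sum_add_distrib, sum_sub_distrib, ← mul_sum, sum_inner_S, sum_const,
    card_univ, nsmul_eq_mul]
  ring

lemma expect_norm_sq_contrastVector_le (hγ : 0 ≤ γ) (hγ2 : γ * ((Fintype.card ι : ℝ) - 2) ≤ 2)
    (w : ι → E) :
    𝔼 c, ‖contrastVector γ w c‖ ^ 2 ≤ (1 + γ) ^ 2 * 𝔼 c, ‖w c‖ ^ 2 := by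
  have deviation_nonpos :
      γ * (γ * ((Fintype.card ι : ℝ) - 2) - 2) * ‖∑ j, w j‖ ^ 2 ≤ 0 :=
    mul_nonpos_of_nonpos_of_nonneg
      (mul_nonpos_of_nonneg_of_nonpos hγ (sub_nonpos.2 hγ2)) (sq_nonneg _)
  rw [Fintype.expect_eq_sum_div_card, Fintype.expect_eq_sum_div_card, ← mul_div_assoc,
    sum_norm_sq_contrastVector]
  gcongr
  exact add_le_of_nonpos_right deviation_nonpos

variable [DecidableEq ι] [Fintype κ]

lemma neg_mul_le_meanUnhingedLoss (hγ : 0 ≤ γ) (hγ2 : γ * ((Fintype.card ι : ℝ) - 2) ≤ 2)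
    (hr : 0 ≤ r) (hs : 0 ≤ s) {h : κ → ι → E} (hw : 𝔼 c, ‖w c‖ ^ 2 ≤ r ^ 2)
    (hh : 𝔼 i, 𝔼 c, ‖h i c‖ ^ 2 ≤ s ^ 2) :
    -((1 + γ) * r * s) ≤ meanUnhingedLoss γ w h := by
  have hv : 𝔼 _i : κ, 𝔼 c, ‖contrastVector γ w c‖ ^ 2 ≤ ((1 + γ) * r) ^ 2 := by
    obtain _ | _ := isEmpty_or_nonempty κ
    · simpa using sq_nonneg ((1 + γ) * r)
    · rw [Fintype.expect_const, mul_pow]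
      exact (expect_norm_sq_contrastVector_le hγ hγ2 w).trans (by gcongr)
  simp only [meanUnhingedLoss, unhingedLoss_eq_neg_inner_contrastVector, expect_neg_distrib]
  rw [← expect_product'] at hv hh ⊢
  exact neg_le_neg (expect_inner_le_mul_of_expect_norm_sq_le (by positivity) hs hv hh)

lemma meanUnhingedLoss_of_sum_eq_zero [Nonempty κ] (γ a : ℝ) (hw : ∑ c, w c = 0) :
    meanUnhingedLoss γ w (fun (_ : κ) c => a • w c) = -((1 + γ) * a * 𝔼 c, ‖w c‖ ^ 2) := by
  have loss_eq (c : ι) : unhingedLoss γ w (a • w c) c = -((1 + γ) * a * ‖w c‖ ^ 2) := by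
    rw [unhingedLoss_eq_neg_inner_contrastVector, contrastVector, hw, smul_zero, sub_zero,
      real_inner_smul_left, real_inner_smul_right, real_inner_self_eq_norm_sq, mul_assoc]
  simp only [meanUnhingedLoss, loss_eq, expect_neg_distrib, ← mul_expect, Fintype.expect_const]

theorem unhinged_loss_neural_collapse_minimizer_general [Nonempty κ]
    (hγ : 0 ≤ γ) (hγ2 : γ * ((Fintype.card ι : ℝ) - 2) ≤ 2) (hr : 0 < r) (hs : 0 ≤ s)
    {h : κ → ι → E} (hw : 𝔼 c, ‖w c‖ ^ 2 = r ^ 2) (hw0 : ∑ c, w c = 0)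
    (hh : ∀ i c, h i c = (s / r) • w c) :
    meanUnhingedLoss γ w h = -((1 + γ) * r * s) ∧
    ∀ (w' : ι → E) (h' : κ → ι → E),
      𝔼 c, ‖w' c‖ ^ 2 ≤ r ^ 2 → 𝔼 i, 𝔼 c, ‖h' i c‖ ^ 2 ≤ s ^ 2 →
      meanUnhingedLoss γ w h ≤ meanUnhingedLoss γ w' h' := by
  have value : meanUnhingedLoss γ w h = -((1 + γ) * r * s) := by
    rw [funext₂ hh, meanUnhingedLoss_of_sum_eq_zero γ _ hw0, hw]
    field_simp
  exact ⟨value, fun w' h' hw' hh' =>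
    value.trans_le (neg_mul_le_meanUnhingedLoss hγ hγ2 hr.le hs hw' hh')⟩

end UnhingedLoss

lemma avgUnhingedLoss_eq_meanUnhingedLoss {C N p : ℕ} (γ : ℝ)
    (w : Fin C → EuclideanSpace ℝ (Fin p)) (h : Fin N → Fin C → EuclideanSpace ℝ (Fin p)) :
    avgUnhingedLoss C N p γ w h = meanUnhingedLoss γ w h := by
  simp only [avgUnhingedLoss, meanUnhingedLoss, unhingedLoss, Fintype.expect_eq_sum_div_card,
    Fintype.card_fin, ← sum_div]
  ring

/-- **Neural collapse configurations attain the minimum of the unhinged loss.**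
If the prototypes form a simplex ETF of norm `E1` and every feature is the positively
aligned multiple `(E2/E1)·w c` of its class prototype, then the average unhinged loss
equals `-(1+γ)·E1·E2`, and this value is a minimum over all norm-bounded configurations. -/
theorem unhinged_loss_neural_collapse_minimizer
    (C N p : ℕ) (hC : 2 ≤ C) (hN : 1 ≤ N) (hp : 1 ≤ p)
    (γ : ℝ) (hγ : 0 < γ) (hγ2 : γ * ((C : ℝ) - 2) ≤ 2)
    (E1 E2 : ℝ) (hE1 : 0 < E1) (hE2 : 0 ≤ E2)
    (w : Fin C → EuclideanSpace ℝ (Fin p))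
    (h : Fin N → Fin C → EuclideanSpace ℝ (Fin p))
    (hw : ∀ c, ‖w c‖ = E1)
    (hww : ∀ i j, i ≠ j → ⟪w i, w j⟫ = -(E1 ^ 2) / ((C : ℝ) - 1))
    (hh : ∀ (i : Fin N) (c : Fin C), h i c = (E2 / E1) • w c) :
    avgUnhingedLoss C N p γ w h = -((1 + γ) * E1 * E2) ∧
    ∀ (w' : Fin C → EuclideanSpace ℝ (Fin p))
      (h' : Fin N → Fin C → EuclideanSpace ℝ (Fin p)),
      (∀ c, ‖w' c‖ ≤ E1) → (∀ i c, ‖h' i c‖ ≤ E2) →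
      avgUnhingedLoss C N p γ w h ≤ avgUnhingedLoss C N p γ w' h' := by
  have : Nontrivial (Fin C) := Fin.nontrivial_iff_two_le.2 hC
  have : Nonempty (Fin N) := Fin.pos_iff_nonempty.1 hN
  have centred : ∑ c, w c = 0 :=
    sum_eq_zero_of_norm_eq_of_inner_eq hw fun i j hij => by simpa using hww i j hij
  obtain ⟨value, minimal⟩ := unhinged_loss_neural_collapse_minimizer_general hγ.le
    (by simpa using hγ2) hE1 hE2 (by simp [hw]) centred hh
  simp only [avgUnhingedLoss_eq_meanUnhingedLoss]
  exact ⟨value, fun w' h' hw' hh' => minimal w' h' (expect_norm_sq_le hw')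
    (expect_le univ_nonempty fun i _ => expect_norm_sq_le (hh' i))⟩
end

section
/- Let C, N, p ≥ 1 be integers, γ > 0, and ε0 > 0. Let w_1,…,w_C ∈ ℝ^p be nonzero, and let η : ℕ → ℝ satisfy η(t) ≥ ε0 for all t and lim_{t→∞} η(t+1)/η(t) = 1. For each i ∈ [N], c ∈ [C], let h_{i,c} : ℕ → ℝ^p satisfy h_{i,c}(0) ≠ 0, ⟨w_c, h_{i,c}(0)⟩/(‖w_c‖₂·‖h_{i,c}(0)‖₂) > −1, and h_{i,c}(t+1) = h_{i,c}(t) + ((1+γ)·η(t)/(C·N·‖h_{i,c}(t)‖₂))·( w_c − (⟨h_{i,c}(t), w_c⟩/‖h_{i,c}(t)‖₂²)·h_{i,c}(t) ) for every t. Assume that for each (i,c) the sequence t ↦ η(t)/‖h_{i,c}(t)‖₂ is non-increasing and (1+γ)·η(0)·‖w_c‖₂/(C·N) ≤ ‖h_{i,c}(0)‖₂². If in addition there exists L such that ‖h_{i,c}(t)‖₂ ≤ L for all t, i, c, then there exist μ > 0 and K ≥ 0 such that for all t ∈ ℕ: √( Σ_{i∈[N]} Σ_{c∈[C]} ‖ h_{i,c}(t)/‖h_{i,c}(t)‖₂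 − w_c/‖w_c‖₂ ‖₂² ) ≤ K·e^{−μ·t}. -/
open scoped BigOperators
open RealInnerProductSpace Filter

/-!
Each feature evolves independently. Let `θ` be the angle between `h` and `w`, and let
`b = r ‖w‖ / ‖h‖ ^ 2` be the relative size of a step with learning rate `r`. The step is orthogonal
to `h`, so `‖h'‖ = ‖h‖ √(1 + b² sin² θ)` and `cos θ' = (cos θ + b sin² θ) / √(1 + b² sin² θ)`. For
`0 ≤ b ≤ 1` this gives `cos θ' ≥ cos θ + b sin² θ / 2`.

The same gain in the cosine controls the growth of the norm: `‖h'‖ ≤ ‖h‖ exp (b² sin² θ / 2)`, so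
`‖h‖ exp (-cos θ)` never increases and the norms stay below `e² ‖h 0‖`. Hence `b` stays above a
positive constant as long as `r` does. As `sin² θ = (1 - cos θ) (1 + cos θ)` and `1 + cos θ` stays
above its positive initial value, `1 - cos θ` decays geometrically; the squared distance between
the normalized vectors is `2 (1 - cos θ)`.
-/

/-- `u` is bounded above by a multiple of a decaying exponential. Only an upper bound is required,
as the notion is meant for nonnegative sequences. -/
def DecaysExponentially (u : ℕ → ℝ) : Prop :=
  ∃ μ K : ℝ, 0 < μ ∧ 0 ≤ K ∧ ∀ t : ℕ, u t ≤ K * Real.exp (-(μ * t))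

namespace DecaysExponentially

variable {u v : ℕ → ℝ}

lemma zero : DecaysExponentially fun _ => 0 :=
  ⟨1, 0, one_pos, le_rfl, by simp⟩

lemma add (hu : DecaysExponentially u) (hv : DecaysExponentially v) :
    DecaysExponentially fun t => u t + v t := by
  obtain ⟨μ, K, hμ, hK, hu⟩ := hu
  obtain ⟨ν, M, hν, hM, hv⟩ := hv
  refine ⟨min μ ν, K + M, lt_min hμ hν, add_nonneg hK hM, fun t => ?_⟩
  calc u t + v t ≤ K * Real.exp (-(μ * t)) + M * Real.exp (-(ν * t)) := add_le_add (hu t) (hv t)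
    _ ≤ K * Real.exp (-(min μ ν * t)) + M * Real.exp (-(min μ ν * t)) := by
        gcongr
        exacts [min_le_left μ ν, min_le_right μ ν]
    _ = (K + M) * Real.exp (-(min μ ν * t)) := by ring

lemma sum {ι : Type*} {s : Finset ι} {u : ι → ℕ → ℝ} (hu : ∀ i ∈ s, DecaysExponentially (u i)) :
    DecaysExponentially fun t => ∑ i ∈ s, u i t := by
  simpa only [Finset.sum_fn] using
    Finset.sum_induction u DecaysExponentially (fun _ _ => add) zero hu

lemma const_mul {a : ℝ} (ha : 0 ≤ a) (hu : DecaysExponentially u) :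
    DecaysExponentially fun t => a * u t := by
  obtain ⟨μ, K, hμ, hK, hu⟩ := hu
  refine ⟨μ, a * K, hμ, mul_nonneg ha hK, fun t => ?_⟩
  rw [mul_assoc]
  exact mul_le_mul_of_nonneg_left (hu t) ha

lemma sqrt (hu : DecaysExponentially u) : DecaysExponentially fun t => √(u t) := by
  obtain ⟨μ, K, hμ, hK, hu⟩ := hu
  refine ⟨μ / 2, √K, half_pos hμ, Real.sqrt_nonneg K, fun t => ?_⟩
  calc √(u t) ≤ √(K * Real.exp (-(μ * t))) := Real.sqrt_le_sqrt (hu t)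
    _ = √K * Real.exp (-(μ / 2 * t)) := by
        rw [Real.sqrt_mul hK, ← Real.exp_half]
        ring_nf

lemma of_succ_le {δ : ℝ} (hδ : 0 < δ) (hu : ∀ t, 0 ≤ u t)
    (hsucc : ∀ t, u (t + 1) ≤ (1 - δ) * u t) : DecaysExponentially u := by
  refine ⟨δ, u 0, hδ, hu 0, fun t => ?_⟩
  have hexp : ∀ k, u (k + 1) ≤ Real.exp (-δ) * u k := fun k =>
    (hsucc k).trans (mul_le_mul_of_nonneg_right (Real.one_sub_le_exp_neg δ) (hu k))
  calc u t ≤ Real.exp (-δ) ^ t * u 0 := le_geom (Real.exp_pos _).le t fun k _ => hexp k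
    _ = u 0 * Real.exp (-(δ * t)) := by
        rw [← Real.exp_nat_mul]
        ring_nf

end DecaysExponentially

section SphericalDescent

open Real InnerProductGeometry

variable {E : Type*} [NormedAddCommGroup E]

/-- The relative size of `sphericalStep r w h`: this step has length
`relativeStep r w h * sin (angle w h) * ‖h‖` when `0 ≤ r`. -/
noncomputable def relativeStep (r : ℝ) (w h : E) : ℝ := r * ‖w‖ / ‖h‖ ^ 2

lemma relativeStep_nonneg {r : ℝ} (hr : 0 ≤ r) (w h : E) : 0 ≤ relativeStep r w h := by
  unfold relativeStep
  positivity

variable [InnerProductSpace ℝ E]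

section SphericalStep

variable {w h : E}

lemma norm_normalized_sub_normalized_sq (hw : w ≠ 0) (hh : h ≠ 0) :
    ‖(‖h‖⁻¹ • h) - (‖w‖⁻¹ • w)‖ ^ 2 = 2 * (1 - cos (angle w h)) := by
  have hnh : ‖h‖ ≠ 0 := norm_ne_zero_iff.2 hh
  have hnw : ‖w‖ ≠ 0 := norm_ne_zero_iff.2 hw
  rw [norm_sub_sq_real, norm_smul, norm_smul, norm_inv, norm_inv, norm_norm, norm_norm,
    real_inner_smul_left, real_inner_smul_right, real_inner_comm, cos_angle]
  field_simp
  ring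

/-- The component of `w` orthogonal to `h`. For `h ≠ 0`, the gradient of `x ↦ ⟪w, ‖x‖⁻¹ • x⟫` at
`h` is `‖h‖⁻¹ • orthogonalComponent h w`. -/
noncomputable def orthogonalComponent (h w : E) : E := w - (⟪h, w⟫ / ‖h‖ ^ 2) • h

lemma inner_self_orthogonalComponent (h w : E) : ⟪h, orthogonalComponent h w⟫ = 0 := by
  rcases eq_or_ne h 0 with rfl | hh
  · exact inner_zero_left _
  · rw [orthogonalComponent, inner_sub_right, real_inner_smul_right, real_inner_self_eq_norm_sq,
      div_mul_cancel₀ _ (pow_ne_zero 2 (norm_ne_zero_iff.2 hh)), sub_self]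

lemma inner_orthogonalComponent (h w : E) :
    ⟪w, orthogonalComponent h w⟫ = (‖w‖ * sin (angle w h)) ^ 2 := by
  rcases eq_or_ne h 0 with rfl | hh
  · simp [orthogonalComponent]
  · have hnh : ‖h‖ ≠ 0 := norm_ne_zero_iff.2 hh
    rw [orthogonalComponent, inner_sub_right, real_inner_smul_right, real_inner_self_eq_norm_sq,
      real_inner_comm, ← cos_angle_mul_norm_mul_norm w h, mul_pow, sin_sq]
    field_simp

lemma norm_orthogonalComponent (h w : E) :
    ‖orthogonalComponent h w‖ = ‖w‖ * sin (angle w h) := by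
  refine (sq_eq_sq₀ (norm_nonneg _) (mul_nonneg (norm_nonneg w) (sin_angle_nonneg w h))).1 ?_
  rw [← inner_orthogonalComponent, ← real_inner_self_eq_norm_sq]
  conv_lhs => enter [2]; rw [orthogonalComponent]
  rw [inner_sub_left, real_inner_smul_left, inner_self_orthogonalComponent, mul_zero, sub_zero]

/-- One gradient descent step with learning rate `r` for the objective `x ↦ -⟪w, ‖x‖⁻¹ • x⟫`. -/
noncomputable def sphericalStep (r : ℝ) (w h : E) : E := h + (r / ‖h‖) • orthogonalComponent h w

lemma inner_sphericalStep (r : ℝ) (w h : E) :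
    ⟪w, sphericalStep r w h⟫ =
      ‖w‖ * ‖h‖ * (cos (angle w h) + relativeStep r w h * sin (angle w h) ^ 2) := by
  rcases eq_or_ne h 0 with rfl | hh
  · simp [sphericalStep]
  · have hnh : ‖h‖ ≠ 0 := norm_ne_zero_iff.2 hh
    rw [sphericalStep, inner_add_right, real_inner_smul_right, inner_orthogonalComponent,
      ← cos_angle_mul_norm_mul_norm, relativeStep]
    field_simp

lemma norm_sphericalStep (r : ℝ) (w h : E) :
    ‖sphericalStep r w h‖ = ‖h‖ * √(1 + (relativeStep r w h * sin (angle w h)) ^ 2) := by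
  refine (sq_eq_sq₀ (norm_nonneg _) (by positivity)).1 ?_
  rw [sphericalStep, norm_add_sq_real, real_inner_smul_right, inner_self_orthogonalComponent,
    norm_smul, norm_orthogonalComponent, mul_pow, mul_pow ‖h‖, sq_sqrt (by positivity),
    Real.norm_eq_abs, sq_abs, relativeStep]
  rcases eq_or_ne h 0 with rfl | hh
  · simp
  · have hnh : ‖h‖ ≠ 0 := norm_ne_zero_iff.2 hh
    field_simp
    ring

lemma norm_le_norm_sphericalStep (r : ℝ) (w h : E) : ‖h‖ ≤ ‖sphericalStep r w h‖ := by
  rw [norm_sphericalStep]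
  exact le_mul_of_one_le_right (norm_nonneg h)
    (one_le_sqrt.2 (le_add_of_nonneg_right (sq_nonneg _)))

lemma cos_angle_sphericalStep (hw : w ≠ 0) (hh : h ≠ 0) (r : ℝ) :
    cos (angle w (sphericalStep r w h)) =
      (cos (angle w h) + relativeStep r w h * sin (angle w h) ^ 2) /
        √(1 + (relativeStep r w h * sin (angle w h)) ^ 2) := by
  rw [cos_angle, inner_sphericalStep, norm_sphericalStep, ← mul_assoc,
    mul_div_mul_left _ _ (mul_ne_zero (norm_ne_zero_iff.2 hw) (norm_ne_zero_iff.2 hh))]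

lemma cos_add_half_le_div_sqrt {b : ℝ} (hb0 : 0 ≤ b) (hb1 : b ≤ 1) (θ : ℝ) :
    cos θ + b * sin θ ^ 2 / 2 ≤ (cos θ + b * sin θ ^ 2) / √(1 + (b * sin θ) ^ 2) := by
  have hsqrt_ge : 1 ≤ √(1 + (b * sin θ) ^ 2) :=
    one_le_sqrt.2 (le_add_of_nonneg_right (sq_nonneg _))
  have hsq_le : (b * sin θ) ^ 2 ≤ b * sin θ ^ 2 := by
    rw [mul_pow]
    exact mul_le_mul_of_nonneg_right (pow_le_of_le_one hb0 hb1 two_ne_zero) (sq_nonneg _)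
  have hsqrt_le : √(1 + (b * sin θ) ^ 2) ≤ 1 + b * sin θ ^ 2 / 2 := by
    linarith [sqrt_one_add_le (by linarith [sq_nonneg (b * sin θ)] : -1 ≤ (b * sin θ) ^ 2)]
  have hlhs_le : cos θ + b * sin θ ^ 2 / 2 ≤ 1 := by
    nlinarith [sin_sq_add_cos_sq θ, sq_nonneg (1 - cos θ), sq_nonneg (sin θ)]
  rw [le_div_iff₀ (by positivity)]
  nlinarith

lemma cos_angle_add_half_le_cos_angle_sphericalStep (hw : w ≠ 0) (hh : h ≠ 0) {r : ℝ} (hr : 0 ≤ r)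
    (hb : relativeStep r w h ≤ 1) :
    cos (angle w h) + relativeStep r w h * sin (angle w h) ^ 2 / 2 ≤
      cos (angle w (sphericalStep r w h)) :=
  (cos_add_half_le_div_sqrt (relativeStep_nonneg hr w h) hb _).trans_eq
    (cos_angle_sphericalStep hw hh r).symm

lemma norm_mul_exp_neg_cos_sphericalStep_le (hw : w ≠ 0) (hh : h ≠ 0) {r : ℝ} (hr : 0 ≤ r)
    (hb : relativeStep r w h ≤ 1) :
    ‖sphericalStep r w h‖ * exp (-cos (angle w (sphericalStep r w h))) ≤
      ‖h‖ * exp (-cos (angle w h)) := by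
  have hgain := cos_angle_add_half_le_cos_angle_sphericalStep hw hh hr hb
  have hb0 := relativeStep_nonneg hr w h
  rw [norm_sphericalStep]
  generalize cos (angle w (sphericalStep r w h)) = c' at *
  generalize relativeStep r w h = b at *
  generalize angle w h = θ at *
  have hsqrt_le : √(1 + (b * sin θ) ^ 2) ≤ exp (c' - cos θ) := calc
    √(1 + (b * sin θ) ^ 2) ≤ 1 + (b * sin θ) ^ 2 / 2 :=
      sqrt_one_add_le (by linarith [sq_nonneg (b * sin θ)])
    _ ≤ exp ((b * sin θ) ^ 2 / 2) := by linarith [add_one_le_exp ((b * sin θ) ^ 2 / 2)]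
    _ ≤ exp (b * sin θ ^ 2 / 2) := by
        rw [mul_pow]
        gcongr
        exact pow_le_of_le_one hb0 hb two_ne_zero
    _ ≤ exp (c' - cos θ) := exp_le_exp.2 (by linarith)
  calc ‖h‖ * √(1 + (b * sin θ) ^ 2) * exp (-c')
      ≤ ‖h‖ * exp (c' - cos θ) * exp (-c') := by gcongr
    _ = ‖h‖ * exp (-cos θ) := by
        rw [mul_assoc, ← exp_add]
        ring_nf

end SphericalStep

/-- `h` is a gradient descent trajectory of the objective `x ↦ -⟪w, ‖x‖⁻¹ • x⟫` with learning
rates `r t`. Any constant factor of the objective is absorbed into `r`. -/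
def IsSphericalDescent (r : ℕ → ℝ) (w : E) (h : ℕ → E) : Prop :=
  ∀ t, h (t + 1) = sphericalStep (r t) w (h t)

namespace IsSphericalDescent

variable {r : ℕ → ℝ} {w : E} {h : ℕ → E}

lemma monotone_norm (hd : IsSphericalDescent r w h) : Monotone fun t => ‖h t‖ :=
  monotone_nat_of_le_succ fun t => by
    rw [hd t]
    exact norm_le_norm_sphericalStep (r t) w (h t)

lemma ne_zero (hd : IsSphericalDescent r w h) (h0 : h 0 ≠ 0) (t : ℕ) : h t ≠ 0 :=
  norm_pos_iff.1 ((norm_pos_iff.2 h0).trans_le (hd.monotone_norm t.zero_le))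

lemma relativeStep_le_one (hd : IsSphericalDescent r w h) (h0 : h 0 ≠ 0) {t : ℕ}
    (hr : r t / ‖h t‖ ≤ r 0 / ‖h 0‖) (hinit : r 0 * ‖w‖ ≤ ‖h 0‖ ^ 2) :
    relativeStep (r t) w (h t) ≤ 1 := by
  have hn0 : 0 < ‖h 0‖ := norm_pos_iff.2 h0
  have hnt : 0 < ‖h t‖ := norm_pos_iff.2 (hd.ne_zero h0 t)
  calc relativeStep (r t) w (h t) = r t / ‖h t‖ * (‖w‖ / ‖h t‖) := by
        rw [relativeStep, sq, mul_div_mul_comm]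
    _ ≤ r 0 / ‖h 0‖ * (‖w‖ / ‖h t‖) := by gcongr
    _ = r 0 * ‖w‖ / (‖h 0‖ * ‖h t‖) := div_mul_div_comm ..
    _ ≤ ‖h 0‖ ^ 2 / (‖h 0‖ * ‖h t‖) := by gcongr
    _ = ‖h 0‖ / ‖h t‖ := by rw [sq, mul_div_mul_left _ _ hn0.ne']
    _ ≤ 1 := (div_le_one hnt).2 (hd.monotone_norm t.zero_le)

lemma monotone_cos_angle (hd : IsSphericalDescent r w h) (hw : w ≠ 0) (h0 : h 0 ≠ 0)
    (hr : ∀ t, 0 ≤ r t) (hb : ∀ t, relativeStep (r t) w (h t) ≤ 1) :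
    Monotone fun t => cos (angle w (h t)) :=
  monotone_nat_of_le_succ fun t => by
    have hgain :=
      cos_angle_add_half_le_cos_angle_sphericalStep hw (hd.ne_zero h0 t) (hr t) (hb t)
    have hb0 := relativeStep_nonneg (hr t) w (h t)
    rw [hd t]
    exact (le_add_of_nonneg_right (by positivity)).trans hgain

lemma antitone_norm_mul_exp_neg_cos (hd : IsSphericalDescent r w h) (hw : w ≠ 0) (h0 : h 0 ≠ 0)
    (hr : ∀ t, 0 ≤ r t) (hb : ∀ t, relativeStep (r t) w (h t) ≤ 1) :
    Antitone fun t => ‖h t‖ * exp (-cos (angle w (h t))) :=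
  antitone_nat_of_succ_le fun t => by
    rw [hd t]
    exact norm_mul_exp_neg_cos_sphericalStep_le hw (hd.ne_zero h0 t) (hr t) (hb t)

lemma norm_le (hd : IsSphericalDescent r w h) (hw : w ≠ 0) (h0 : h 0 ≠ 0)
    (hr : ∀ t, 0 ≤ r t) (hb : ∀ t, relativeStep (r t) w (h t) ≤ 1) (t : ℕ) :
    ‖h t‖ ≤ exp 2 * ‖h 0‖ := by
  have hlyapunov : ‖h t‖ * exp (-cos (angle w (h t))) ≤ ‖h 0‖ * exp (-cos (angle w (h 0))) :=
    hd.antitone_norm_mul_exp_neg_cos hw h0 hr hb t.zero_le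
  calc ‖h t‖ = ‖h t‖ * exp (-cos (angle w (h t))) * exp (cos (angle w (h t))) := by
        rw [mul_assoc, ← exp_add, neg_add_cancel, exp_zero, mul_one]
    _ ≤ ‖h 0‖ * exp (-cos (angle w (h 0))) * exp (cos (angle w (h t))) := by gcongr
    _ ≤ ‖h 0‖ * exp 1 * exp 1 := by
        gcongr
        · linarith [neg_one_le_cos (angle w (h 0))]
        · exact cos_le_one _
    _ = exp 2 * ‖h 0‖ := by
        rw [mul_assoc, ← exp_add, mul_comm]
        norm_num

lemma exists_pos_le_relativeStep (hd : IsSphericalDescent r w h) (hw : w ≠ 0) (h0 : h 0 ≠ 0)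
    {ε : ℝ} (hε : 0 < ε) (hr : ∀ t, ε ≤ r t) (hb : ∀ t, relativeStep (r t) w (h t) ≤ 1) :
    ∃ β, 0 < β ∧ ∀ t, β ≤ relativeStep (r t) w (h t) := by
  have hnw : 0 < ‖w‖ := norm_pos_iff.2 hw
  have hr0 : ∀ t, 0 ≤ r t := fun t => hε.le.trans (hr t)
  refine ⟨ε * ‖w‖ / (exp 2 * ‖h 0‖) ^ 2, by positivity, fun t => ?_⟩
  have hnt : 0 < ‖h t‖ := norm_pos_iff.2 (hd.ne_zero h0 t)
  unfold relativeStep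
  gcongr
  exacts [mul_nonneg (hr0 t) hnw.le, hr t, hd.norm_le hw h0 hr0 hb t]

lemma decaysExponentially_one_sub_cos_angle (hd : IsSphericalDescent r w h) (hw : w ≠ 0)
    (h0 : h 0 ≠ 0) (hcos : -1 < cos (angle w (h 0))) {ε : ℝ} (hε : 0 < ε) (hr : ∀ t, ε ≤ r t)
    (hb : ∀ t, relativeStep (r t) w (h t) ≤ 1) :
    DecaysExponentially fun t => 1 - cos (angle w (h t)) := by
  obtain ⟨β, hβ, hβb⟩ := hd.exists_pos_le_relativeStep hw h0 hε hr hb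
  have hr0 : ∀ t, 0 ≤ r t := fun t => hε.le.trans (hr t)
  have hcos0 : 0 < 1 + cos (angle w (h 0)) := by linarith
  have hdefect : ∀ t, 0 ≤ 1 - cos (angle w (h t)) := fun t => sub_nonneg.2 (cos_le_one _)
  refine .of_succ_le (δ := β * (1 + cos (angle w (h 0))) / 2) (by positivity) hdefect fun t => ?_
  have hmono : cos (angle w (h 0)) ≤ cos (angle w (h t)) :=
    hd.monotone_cos_angle hw h0 hr0 hb t.zero_le
  have hgain : β * (1 + cos (angle w (h 0))) * (1 - cos (angle w (h t))) ≤
      relativeStep (r t) w (h t) * sin (angle w (h t)) ^ 2 := calc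
    _ ≤ relativeStep (r t) w (h t) * (1 + cos (angle w (h t))) * (1 - cos (angle w (h t))) := by
        gcongr
        exacts [hdefect t, relativeStep_nonneg (hr0 t) w (h t), hβb t]
    _ = relativeStep (r t) w (h t) * sin (angle w (h t)) ^ 2 := by
        rw [sin_sq]
        ring
  have hstep := cos_angle_add_half_le_cos_angle_sphericalStep hw (hd.ne_zero h0 t) (hr0 t) (hb t)
  rw [hd t]
  linarith

lemma decaysExponentially_norm_normalized_sub_sq (hd : IsSphericalDescent r w h) (hw : w ≠ 0)
    (h0 : h 0 ≠ 0) (hcos : -1 < cos (angle w (h 0))) {ε : ℝ} (hε : 0 < ε) (hr : ∀ t, ε ≤ r t)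
    (hb : ∀ t, relativeStep (r t) w (h t) ≤ 1) :
    DecaysExponentially fun t => ‖(‖h t‖⁻¹ • h t) - (‖w‖⁻¹ • w)‖ ^ 2 := by
  simp only [norm_normalized_sub_normalized_sq hw (hd.ne_zero h0 _)]
  exact (hd.decaysExponentially_one_sub_cos_angle hw h0 hcos hε hr hb).const_mul zero_le_two

end IsSphericalDescent

theorem spherical_constrained_exponential_convergence_general
    {ι κ : Type*} [Fintype ι] [Fintype κ] {w : κ → E} (hw : ∀ c, w c ≠ 0)
    {h : ι → κ → ℕ → E} (h0 : ∀ i c, h i c 0 ≠ 0)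
    (hcos : ∀ i c, -1 < cos (angle (w c) (h i c 0)))
    {r : ℕ → ℝ} {ε : ℝ} (hε : 0 < ε) (hr : ∀ t, ε ≤ r t)
    (hd : ∀ i c, IsSphericalDescent r (w c) (h i c))
    (hb : ∀ i c t, relativeStep (r t) (w c) (h i c t) ≤ 1) :
    DecaysExponentially fun t =>
      √(∑ i, ∑ c, ‖(‖h i c t‖⁻¹ • h i c t) - (‖w c‖⁻¹ • w c)‖ ^ 2) :=
  .sqrt <| .sum fun i _ => .sum fun c _ =>
    (hd i c).decaysExponentially_norm_normalized_sub_sq (hw c) (h0 i c) (hcos i c) hε hr (hb i c)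

end SphericalDescent

/-- **Exponential convergence in the spherical constrained case under bounded features.**
If in addition the feature norms stay bounded by `L`, the Frobenius distance between
the matrix of normalized features and the matrix of normalized prototypes decreases
at an exponential rate `K·e^{−μ·t}`. -/
theorem spherical_constrained_exponential_convergence
    (C N p : ℕ) (hC : 1 ≤ C) (hN : 1 ≤ N) (hp : 1 ≤ p)
    (γ : ℝ) (hγ : 0 < γ)
    (ε0 : ℝ) (hε0 : 0 < ε0)
    (w : Fin C → EuclideanSpace ℝ (Fin p)) (hw : ∀ c, w c ≠ 0)
    (η : ℕ → ℝ) (hη : ∀ t, ε0 ≤ η t)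
    (hηratio : Tendsto (fun t => η (t + 1) / η t) atTop (nhds 1))
    (h : Fin N → Fin C → ℕ → EuclideanSpace ℝ (Fin p))
    (h0 : ∀ i c, h i c 0 ≠ 0)
    (hcos : ∀ i c, ⟪w c, h i c 0⟫ / (‖w c‖ * ‖h i c 0‖) > -1)
    (hrec : ∀ (i : Fin N) (c : Fin C) (t : ℕ),
      h i c (t + 1) = h i c t +
        ((1 + γ) * η t / ((C : ℝ) * N * ‖h i c t‖)) •
          (w c - (⟪h i c t, w c⟫ / ‖h i c t‖ ^ 2) • h i c t))
    (hmono : ∀ i c, Antitone fun t => η t / ‖h i c t‖)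
    (hinit : ∀ i c, (1 + γ) * η 0 * ‖w c‖ / ((C : ℝ) * N) ≤ ‖h i c 0‖ ^ 2)
    (L : ℝ) (hL : ∀ (t : ℕ) (i : Fin N) (c : Fin C), ‖h i c t‖ ≤ L) :
    ∃ μ K : ℝ, 0 < μ ∧ 0 ≤ K ∧ ∀ t : ℕ,
      Real.sqrt (∑ i : Fin N, ∑ c : Fin C,
          ‖(‖h i c t‖⁻¹ • h i c t) - (‖w c‖⁻¹ • w c)‖ ^ 2) ≤
        K * Real.exp (-(μ * t)) := by
  have hd : ∀ i c, IsSphericalDescent (fun t => (1 + γ) * η t / (C * N)) (w c) (h i c) :=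
    fun i c t => by rw [hrec, sphericalStep, orthogonalComponent, div_div]
  have hmono_rate : ∀ i c, Antitone fun t => (1 + γ) * η t / (C * N) / ‖h i c t‖ := fun i c => by
    simpa only [div_mul_div_comm, div_div] using
      (hmono i c).const_mul (by positivity : 0 ≤ (1 + γ) / (C * N))
  exact spherical_constrained_exponential_convergence_general hw h0
    (fun i c => (hcos i c).trans_eq (InnerProductGeometry.cos_angle _ _).symm)
    (ε := (1 + γ) * ε0 / (C * N)) (by positivity) (fun t => by have := hη t; gcongr) hd
    fun i c t => (hd i c).relativeStep_le_one (h0 i c) (hmono_rate i c t.zero_le)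
      (by simpa only [div_mul_eq_mul_div] using hinit i c)
end
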